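/- If G is a triangle-free graph of order n with minimum degree at least 4, then ι(G) ≤ 3n/10. -/

import Mathlib

open Classical

/-- The closed neighborhood `N[D]` of a set `D` of vertices. -/
def closedNbhd {V : Type*} (G : SimpleGraph V) (D : Set V) : Set V :=
  {v | v ∈ D ∨ ∃ u ∈ D, G.Adj u v}

/-- `S` is an isolating set of `G`: deleting `N[S]` leaves no edge. -/
def IsIsolatingSet {V : Type*} (G : SimpleGraph V) (S : Set V) : Prop :=
  ∀ u v : V, G.Adj u v → u ∈ closedNbhd G S ∨ v ∈ closedNbhd G S

/-- The isolation number: the minimum cardinality of an isolating set. -/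
noncomputable def isolationNumber {V : Type*} [Fintype V] (G : SimpleGraph V) : ℕ :=
  sInf {k | ∃ S : Set V, IsIsolatingSet G S ∧ S.ncard = k}

/-!
Process `G` greedily, keeping a set `W` of vertices that contains every edge not yet isolated.
A vertex of `W` carries weight `36`; a vertex outside `W` with `k` neighbours in `W` carries weight
`0, 8, 12, 15, 18, 21, 21, …` for `k = 0, 1, 2, …`. The total weight starts at `36 n`, so it is
enough that from every nonempty `W` one can choose some set `T` of vertices and shrink `W`
accordingly while losing weight at least `120 * |T|`. A deleted vertex `u` loses its weight `36` up
to its new weight as an outside vertex, and since it has at least `4 - deg_W u` neighbours outside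
`W`, it also makes those lose weight.

If no such step exists, then successively: `G[W]` has no isolated vertices, its degrees are at most
`3`, vertices outside have at most `5` neighbours in `W`, the degrees are at most `2`, adjacent
vertices of `G[W]` have equal degrees, there are no cycle components (the tight case is the
5-cycle), and finally there are no `K₂` components, so `W` is empty.
-/

namespace Isolation

open Finset

variable {V : Type*} {G : SimpleGraph V} {W W' R T T' : Finset V} {a b u v w x y : V}

/-! ### Neighbours inside a vertex set -/

/-- The neighbours of `v` lying in `W`; for `v ∈ W` its cardinality is the degree of `v` in the
induced subgraph `G[W]`. -/
noncomputable def nbrsIn (G : SimpleGraph V) (W : Finset V) (v : V) : Finset V :=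
  {w ∈ W | G.Adj v w}

lemma mem_nbrsIn : w ∈ nbrsIn G W v ↔ w ∈ W ∧ G.Adj v w := mem_filter

lemma nbrsIn_subset : nbrsIn G W v ⊆ W := filter_subset _ _

lemma mem_nbrsIn_symm (hu : u ∈ W) (h : v ∈ nbrsIn G W u) : u ∈ nbrsIn G W v :=
  mem_nbrsIn.2 ⟨hu, (mem_nbrsIn.1 h).2.symm⟩

lemma notMem_nbrsIn_self : v ∉ nbrsIn G W v := fun h ↦ G.loopless.irrefl v (mem_nbrsIn.1 h).2

lemma nbrsIn_sdiff : nbrsIn G (W \ R) v = nbrsIn G W v \ R := by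
  ext w
  simp only [mem_nbrsIn, mem_sdiff]
  tauto

lemma nbrsIn_sdiff_eq_empty (h : nbrsIn G W v ⊆ R) : nbrsIn G (W \ R) v = ∅ := by
  rw [nbrsIn_sdiff, sdiff_eq_empty_iff_subset.2 h]

lemma card_nbrsIn_sdiff_le : #(nbrsIn G (W \ R) v) ≤ #(nbrsIn G W v) :=
  card_le_card (filter_subset_filter _ sdiff_subset)

lemma card_nbrsIn_sdiff_add (hR : R ⊆ W) :
    #(nbrsIn G (W \ R) v) + #(nbrsIn G R v) = #(nbrsIn G W v) := by
  have h : nbrsIn G R v = nbrsIn G W v ∩ R := by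
    rw [nbrsIn, nbrsIn, filter_inter, inter_eq_right.2 hR]
  rw [nbrsIn_sdiff, h, card_sdiff_add_card_inter]

lemma card_nbrsIn_sdiff_lt (hw : w ∈ nbrsIn G W v) (hwR : w ∈ R) :
    #(nbrsIn G (W \ R) v) < #(nbrsIn G W v) := by
  rw [nbrsIn_sdiff]
  exact card_lt_card ⟨sdiff_subset, fun h ↦ (mem_sdiff.1 (h hw)).2 hwR⟩

lemma card_nbrsIn_add_compl [Fintype V] :
    #(nbrsIn G W v) + #(nbrsIn G Wᶜ v) = (G.neighborSet v).ncard := by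
  have h : G.neighborSet v = nbrsIn G univ v := by ext; simp [nbrsIn]
  rw [h, Set.ncard_coe_finset, ← card_nbrsIn_sdiff_add (subset_univ W), compl_eq_univ_sdiff,
    add_comm]

lemma sum_card_nbrsIn_comm (G : SimpleGraph V) (A B : Finset V) :
    ∑ v ∈ A, #(nbrsIn G B v) = ∑ u ∈ B, #(nbrsIn G A u) := by
  refine (sum_card_bipartiteAbove_eq_sum_card_bipartiteBelow G.Adj).trans ?_
  simp only [bipartiteBelow, nbrsIn, G.adj_comm]

lemma exists_eq_pair_of_mem {s : Finset V} (hs : #s = 2) (ha : a ∈ s) :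
    ∃ b, a ≠ b ∧ s = {a, b} := by
  obtain ⟨b, hb⟩ := card_eq_one.1 (show #(s.erase a) = 1 by rw [card_erase_of_mem ha, hs])
  refine ⟨b, fun h ↦ ?_, by rw [← insert_erase ha, hb]⟩
  exact notMem_erase a s (by rw [hb, h]; exact mem_singleton_self b)

lemma not_adj_of_mem_nbrsIn (htf : G.CliqueFree 3) (ha : a ∈ nbrsIn G W v)
    (hb : b ∈ nbrsIn G W v) : ¬ G.Adj a b := fun hab ↦
  G.isIndepSet_neighborSet_of_triangleFree htf v (mem_nbrsIn.1 ha).2 (mem_nbrsIn.1 hb).2 hab.ne hab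

lemma ne_of_nbrsIn_eq_pair {c d e : V} (ha : nbrsIn G W a = {e, b}) (hc : nbrsIn G W c = {b, d})
    (hd : d ∈ nbrsIn G W e) : a ≠ c := by
  rintro rfl
  have hne : d ≠ e := by
    rintro rfl
    exact notMem_nbrsIn_self hd
  have hea : e ∈ nbrsIn G W a := by simp [ha]
  have hda : d ∈ nbrsIn G W a := by simp [hc]
  rw [hc] at hea
  rw [ha] at hda
  grind

lemma nbrsIn_sdiff_star_of_path {x₀ x₁ x₂ x₃ y₁ y₂ : V}
    (hx₀ : nbrsIn G W x₀ = {y₁, x₁}) (hx₁ : nbrsIn G W x₁ = {x₀, x₂})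
    (hy₁ : nbrsIn G W y₁ = {x₀, y₂}) (hx₂ : nbrsIn G W x₂ = {x₁, x₃})
    (hx₀x₂ : x₀ ≠ x₂) (hy₁x₂ : y₁ ≠ x₂) (hx₁x₃ : x₁ ≠ x₃) (hx₂y₂ : x₂ ≠ y₂) (hx₃y₂ : x₃ ≠ y₂) :
    x₂ ∈ W \ insert x₀ (nbrsIn G W x₀) ∧
      nbrsIn G (W \ insert x₀ (nbrsIn G W x₀)) x₂ = {x₃} ∧
      nbrsIn G (W \ insert x₀ (nbrsIn G W x₀)) x₃ = nbrsIn G W x₃ := by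
  have hx₂W : x₂ ∈ W := nbrsIn_subset (show x₂ ∈ nbrsIn G W x₁ by simp [hx₁])
  have hx₃x₂ : x₃ ∈ nbrsIn G W x₂ := by simp [hx₂]
  have hx₃W : x₃ ∈ W := nbrsIn_subset hx₃x₂
  have hx₂x₃ : x₂ ∈ nbrsIn G W x₃ := mem_nbrsIn_symm hx₂W hx₃x₂
  have hx₁x₂ : x₁ ≠ x₂ := by
    rintro rfl
    exact notMem_nbrsIn_self (show x₁ ∈ nbrsIn G W x₁ by simp [hx₁])
  have hx₂star : x₂ ∉ insert x₀ (nbrsIn G W x₀) := by grind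
  have hx₃star : x₃ ∉ insert x₀ (nbrsIn G W x₀) := by grind
  refine ⟨by grind, by rw [nbrsIn_sdiff]; grind, ?_⟩
  rw [nbrsIn_sdiff, Finset.sdiff_eq_self_iff_disjoint, disjoint_right]
  intro w hw hwx₃
  have : x₃ ∈ nbrsIn G W w := mem_nbrsIn_symm hx₃W hwx₃
  have : x₂ ≠ x₃ := by rintro rfl; exact notMem_nbrsIn_self hx₂x₃
  grind

/-! ### Reductions -/

/-- Choosing `T` reduces the task of isolating `G[W]` to that of isolating `G[W']`: every edge
of `G[W]` that is not hit by `N[T]` lies inside `W'`. -/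
def ReducesTo (G : SimpleGraph V) (T W W' : Finset V) : Prop :=
  ∀ u ∈ W, ∀ w ∈ W, G.Adj u w →
    u ∈ closedNbhd G T ∨ w ∈ closedNbhd G T ∨ (u ∈ W' ∧ w ∈ W')

lemma closedNbhd_mono {S S' : Set V} (h : S ⊆ S') : closedNbhd G S ⊆ closedNbhd G S' := by
  rintro v (hv | ⟨u, hu, huv⟩)
  exacts [.inl (h hv), .inr ⟨u, h hu, huv⟩]

lemma ReducesTo.trans {W'' : Finset V} (h : ReducesTo G T W W') (h' : ReducesTo G T' W' W'') :
    ReducesTo G (T ∪ T') W W'' := by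
  have hT : closedNbhd G T ⊆ closedNbhd G ↑(T ∪ T') := closedNbhd_mono (mod_cast subset_union_left)
  have hT' : closedNbhd G T' ⊆ closedNbhd G ↑(T ∪ T') :=
    closedNbhd_mono (mod_cast subset_union_right)
  intro u hu w hw huw
  rcases h u hu w hw huw with hu | hw | ⟨hu, hw⟩
  · exact .inl (hT hu)
  · exact .inr (.inl (hT hw))
  · exact (h' u hu w hw huw).imp (hT' ·) (.imp_left (hT' ·))

lemma reducesTo_sdiff
    (h : ∀ u ∈ R, u ∈ closedNbhd G T ∨ ∀ w ∈ nbrsIn G W u, w ∈ closedNbhd G T) :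
    ReducesTo G T W (W \ R) := by
  intro u hu w hw huw
  by_cases huR : u ∈ R
  · exact (h u huR).imp_right fun h ↦ .inl (h w (mem_nbrsIn.2 ⟨hw, huw⟩))
  by_cases hwR : w ∈ R
  · exact (h w hwR).symm.imp (fun h ↦ h u (mem_nbrsIn.2 ⟨hu, huw.symm⟩)) .inl
  · exact .inr (.inr ⟨mem_sdiff.2 ⟨hu, huR⟩, mem_sdiff.2 ⟨hw, hwR⟩⟩)

lemma mem_closedNbhd_singleton : u ∈ closedNbhd G ↑({v} : Finset V) ↔ u = v ∨ G.Adj v u := by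
  simp [closedNbhd]

lemma mem_closedNbhd_pair :
    u ∈ closedNbhd G ↑({v, w} : Finset V) ↔ (u = v ∨ u = w) ∨ G.Adj v u ∨ G.Adj w u := by
  simp [closedNbhd]

lemma reducesTo_sdiff_nbrsIn : ReducesTo G {v} W (W \ nbrsIn G W v) :=
  reducesTo_sdiff fun _ hu ↦ .inl (mem_closedNbhd_singleton.2 (.inr (mem_nbrsIn.1 hu).2))

lemma reducesTo_sdiff_star : ReducesTo G {v} W (W \ insert v (nbrsIn G W v)) :=
  reducesTo_sdiff fun _ hu ↦ .inl (mem_closedNbhd_singleton.2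
    ((mem_insert.1 hu).imp_right fun hu ↦ (mem_nbrsIn.1 hu).2))

/-! ### Weights -/

/-- The weight of a vertex outside `W` with `k` neighbours in `W`. -/
def weight : ℕ → ℕ
  | 0 => 0
  | 1 => 8
  | k + 2 => min (3 * k + 12) 21

lemma weight_mono : Monotone weight := by
  refine monotone_nat_of_le_succ fun k ↦ ?_
  match k with
  | 0 | 1 => decide
  | k + 2 => simp only [weight]; omega

lemma weight_le (k : ℕ) : weight k ≤ 21 := by
  match k with
  | 0 | 1 => decide
  | k + 2 => exact min_le_right _ _

lemma weight_add_three_mul_le {k m : ℕ} (h : k + m ≤ 5) : weight k + 3 * m ≤ weight (k + m) := by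
  have hk : k ≤ 5 := by omega
  have hm : m ≤ 5 := by omega
  interval_cases k <;> interval_cases m <;> first | omega | decide

/-- The outside vertices lose weight at rate at least `s` when `R` is deleted from `W`: each loses
at least `s` for every one of its neighbours in `R`. -/
def HasSlope (G : SimpleGraph V) (s : ℕ) (W R : Finset V) : Prop :=
  ∀ v ∉ W, weight #(nbrsIn G (W \ R) v) + s * #(nbrsIn G R v) ≤ weight #(nbrsIn G W v)

lemma hasSlope_zero : HasSlope G 0 W R := fun v _ ↦ by
  simpa using weight_mono card_nbrsIn_sdiff_le

lemma hasSlope_three (hR : R ⊆ W) (hout : ∀ v ∉ W, #(nbrsIn G W v) ≤ 5) :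
    HasSlope G 3 W R := fun v hv ↦ by
  have h := hout v hv
  rw [← card_nbrsIn_sdiff_add hR] at h ⊢
  exact weight_add_three_mul_le h

lemma hasSlope_eight (hR : R ⊆ W) (hout : ∀ v ∉ W, #(nbrsIn G W v) ≤ 1) :
    HasSlope G 8 W R := fun v hv ↦ by
  have h := hout v hv
  rw [← card_nbrsIn_sdiff_add hR] at h ⊢
  obtain ⟨h₁, h₂⟩ | ⟨h₁, h₂⟩ | ⟨h₁, h₂⟩ :
      (#(nbrsIn G (W \ R) v) = 0 ∧ #(nbrsIn G R v) = 0) ∨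
      (#(nbrsIn G (W \ R) v) = 0 ∧ #(nbrsIn G R v) = 1) ∨
      (#(nbrsIn G (W \ R) v) = 1 ∧ #(nbrsIn G R v) = 0) := by omega
  all_goals rw [h₁, h₂]; decide

/-- A lower bound for the weight lost on account of `u ∈ R` when `R` is deleted from `W` with
slope `s`, provided that `u` has at least `4` neighbours. The inner truncated subtraction is
intended; the outer one never truncates, by `weight_le`. -/
noncomputable def gain (G : SimpleGraph V) (s : ℕ) (W R : Finset V) (u : V) : ℕ :=
  36 + s * (4 - #(nbrsIn G W u)) - weight #(nbrsIn G (W \ R) u)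

lemma le_gain {d k : ℕ} (s : ℕ) (hd : #(nbrsIn G W u) ≤ d) (hk : #(nbrsIn G (W \ R) u) ≤ k) :
    36 + s * (4 - d) - weight k ≤ gain G s W R u := by
  have := weight_mono hk
  have : s * (4 - d) ≤ s * (4 - #(nbrsIn G W u)) := by gcongr
  rw [gain]
  omega

lemma le_gain_of_nbrsIn_subset {d : ℕ} (s : ℕ) (hd : #(nbrsIn G W u) ≤ d)
    (hu : nbrsIn G W u ⊆ R) : 36 + s * (4 - d) ≤ gain G s W R u :=
  le_gain (k := 0) s hd (by rw [nbrsIn_sdiff_eq_empty hu, card_empty])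

/-! ### Cycle components -/

/-- The vertices `x 0, …, x (n - 1)`, in this cyclic order, form a cycle that is a connected
component of `G[W]`. Indices are added modulo `n`. -/
structure IsCycleComponent {n : ℕ} [NeZero n] (G : SimpleGraph V) (W : Finset V)
    (x : Fin n → V) : Prop where
  injective : Function.Injective x
  nbrsIn_eq : ∀ i, nbrsIn G W (x i) = {x (i - 1), x (i + 1)}

lemma isCycleComponent_four {x₀ x₁ x₂ x₃ : V} (h₀ : nbrsIn G W x₀ = {x₃, x₁})
    (h₁ : nbrsIn G W x₁ = {x₀, x₂}) (h₂ : nbrsIn G W x₂ = {x₁, x₃})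
    (h₃ : nbrsIn G W x₃ = {x₂, x₀}) (h₀₂ : x₀ ≠ x₂) (h₁₃ : x₁ ≠ x₃) :
    IsCycleComponent G W ![x₀, x₁, x₂, x₃] where
  injective := by
    have hself : ∀ v, v ∉ nbrsIn G W v := fun v ↦ notMem_nbrsIn_self
    exact List.nodup_ofFn.1 (show [x₀, x₁, x₂, x₃].Nodup by grind)
  nbrsIn_eq i := by
    fin_cases i
    exacts [h₀, h₁, h₂, h₃]

lemma isCycleComponent_five {x₀ x₁ x₂ x₃ x₄ : V} (h₀ : nbrsIn G W x₀ = {x₄, x₁})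
    (h₁ : nbrsIn G W x₁ = {x₀, x₂}) (h₂ : nbrsIn G W x₂ = {x₁, x₃})
    (h₃ : nbrsIn G W x₃ = {x₂, x₄}) (h₄ : nbrsIn G W x₄ = {x₃, x₀}) :
    IsCycleComponent G W ![x₀, x₁, x₂, x₃, x₄] where
  injective := by
    have hself : ∀ v, v ∉ nbrsIn G W v := fun v ↦ notMem_nbrsIn_self
    have h₀₂ := ne_of_nbrsIn_eq_pair h₀ h₂ (by simp [h₄])
    have h₁₃ := ne_of_nbrsIn_eq_pair h₁ h₃ (by simp [h₀])
    have h₂₄ := ne_of_nbrsIn_eq_pair h₂ h₄ (by simp [h₁])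
    have h₃₀ := ne_of_nbrsIn_eq_pair h₃ h₀ (by simp [h₂])
    have h₄₁ := ne_of_nbrsIn_eq_pair h₄ h₁ (by simp [h₃])
    exact List.nodup_ofFn.1 (show [x₀, x₁, x₂, x₃, x₄].Nodup by grind)
  nbrsIn_eq i := by
    fin_cases i
    exacts [h₀, h₁, h₂, h₃, h₄]

namespace IsCycleComponent

variable {n : ℕ} [NeZero n] {x : Fin n → V}

lemma rotate (hx : IsCycleComponent G W x) (i : Fin n) :
    IsCycleComponent G W fun j ↦ x (j + i) where
  injective := hx.injective.comp (add_left_injective i)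
  nbrsIn_eq j := by rw [hx.nbrsIn_eq, sub_add_eq_add_sub, add_right_comm]

lemma mem_nbrsIn_succ (hx : IsCycleComponent G W x) (i : Fin n) :
    x (i + 1) ∈ nbrsIn G W (x i) := by simp [hx.nbrsIn_eq]

lemma adj (hx : IsCycleComponent G W x) (i : Fin n) : G.Adj (x i) (x (i + 1)) :=
  (mem_nbrsIn.1 (hx.mem_nbrsIn_succ i)).2

lemma image_subset (hx : IsCycleComponent G W x) : univ.image x ⊆ W := by
  intro v hv
  obtain ⟨i, -, rfl⟩ := mem_image.1 hv
  simpa using nbrsIn_subset (hx.mem_nbrsIn_succ (i - 1))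

lemma card_image (hx : IsCycleComponent G W x) : #(univ.image x) = n := by
  rw [card_image_of_injective _ hx.injective, card_univ, Fintype.card_fin]

lemma nbrsIn_subset_image (hx : IsCycleComponent G W x) (i : Fin n) :
    nbrsIn G W (x i) ⊆ univ.image x := by
  rw [hx.nbrsIn_eq]
  grind

lemma le_gain (hx : IsCycleComponent G W x) (s : ℕ) (hR : univ.image x ⊆ R) (i : Fin n) :
    36 + s * 2 ≤ gain G s W R (x i) :=
  le_gain_of_nbrsIn_subset (d := 2) s (by rw [hx.nbrsIn_eq]; exact card_le_two)
    ((hx.nbrsIn_subset_image i).trans hR)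

lemma two_mul_card_nbrsIn_le (hx : IsCycleComponent G W x) (htf : G.CliqueFree 3) (v : V) :
    2 * #(nbrsIn G (univ.image x) v) ≤ n := by
  set s : Finset (Fin n) := {i | G.Adj v (x i)}
  have himage : nbrsIn G (univ.image x) v = s.image x := filter_image ..
  -- The neighbourhood of `v` is independent, hence disjoint from its shift along the cycle.
  have hdisj : Disjoint s (s.map (addRightEmbedding 1)) := by
    refine disjoint_left.2 fun j hj hj' ↦ ?_
    obtain ⟨i, hi, rfl⟩ := mem_map.1 hj'
    have hmem : ∀ k ∈ s, x k ∈ nbrsIn G (univ.image x) v := fun k hk ↦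
      himage ▸ mem_image_of_mem x hk
    exact not_adj_of_mem_nbrsIn htf (hmem i hi) (hmem _ hj) (hx.adj i)
  calc 2 * #(nbrsIn G (univ.image x) v) = #s + #(s.map (addRightEmbedding 1)) := by
        rw [himage, card_image_of_injective _ hx.injective, card_map, two_mul]
    _ = #(s ∪ s.map (addRightEmbedding 1)) := (card_union_of_disjoint hdisj).symm
    _ ≤ n := (card_le_univ _).trans_eq (Fintype.card_fin n)

end IsCycleComponent

/-! ### The potential -/

variable [Fintype V]

/-- The total weight: `36` for each vertex of `W` and `weight k` for each vertex outside `W` with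
`k` neighbours in `W`. -/
noncomputable def potential (G : SimpleGraph V) (W : Finset V) : ℕ :=
  36 * #W + ∑ v ∈ Wᶜ, weight #(nbrsIn G W v)

lemma potential_sdiff_add_sum_gain_le {s : ℕ} (hmin : ∀ v, 4 ≤ (G.neighborSet v).ncard)
    (hR : R ⊆ W) (hs : HasSlope G s W R) :
    potential G (W \ R) + ∑ u ∈ R, gain G s W R u ≤ potential G W := by
  have hcompl : (W \ R)ᶜ = Wᶜ ∪ R := by rw [sdiff_eq, compl_inf, compl_compl]; rfl
  have hdisj : Disjoint Wᶜ R := disjoint_compl_left.mono_right hR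
  have hcard : #(W \ R) + #R = #W := card_sdiff_add_card_eq_card hR
  have hgain : ∑ u ∈ R, (gain G s W R u + weight #(nbrsIn G (W \ R) u)) =
      ∑ u ∈ R, (36 + s * (4 - #(nbrsIn G W u))) := sum_congr rfl fun u _ ↦ by
    have := weight_le #(nbrsIn G (W \ R) u)
    rw [gain]
    omega
  have hout : ∑ v ∈ Wᶜ, (weight #(nbrsIn G (W \ R) v) + s * #(nbrsIn G R v)) ≤
      ∑ v ∈ Wᶜ, weight #(nbrsIn G W v) := sum_le_sum fun v hv ↦ hs v (mem_compl.1 hv)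
  have hedges : s * ∑ u ∈ R, (4 - #(nbrsIn G W u)) ≤ s * ∑ v ∈ Wᶜ, #(nbrsIn G R v) := by
    rw [sum_card_nbrsIn_comm]
    gcongr with u
    have := card_nbrsIn_add_compl (G := G) (W := W) (v := u)
    have := hmin u
    omega
  simp only [sum_add_distrib, ← mul_sum, sum_const, smul_eq_mul] at hgain hout
  rw [potential, potential, hcompl, sum_union hdisj]
  omega

lemma potential_sdiff_star_add_le {s c : ℕ} (hmin : ∀ v, 4 ≤ (G.neighborSet v).ncard)
    (hv : v ∈ W) (hs : HasSlope G s W (insert v (nbrsIn G W v)))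
    (hc : ∀ u ∈ nbrsIn G W v,
      c + weight (#(nbrsIn G W u) - 1) ≤ 36 + s * (4 - #(nbrsIn G W u))) :
    potential G (W \ insert v (nbrsIn G W v)) +
      (36 + s * (4 - #(nbrsIn G W v)) + #(nbrsIn G W v) * c) ≤ potential G W := by
  have hnbrs : ∀ u ∈ nbrsIn G W v, c ≤ gain G s W (insert v (nbrsIn G W v)) u := fun u hu ↦ by
    have hlt := card_nbrsIn_sdiff_lt (mem_nbrsIn_symm hv hu) (mem_insert_self v (nbrsIn G W v))
    have hle := le_gain s le_rfl (Nat.le_sub_one_of_lt hlt)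
    have := hc u hu
    omega
  have hsum : #(nbrsIn G W v) * c ≤
      ∑ u ∈ nbrsIn G W v, gain G s W (insert v (nbrsIn G W v)) u := card_nsmul_le_sum _ _ _ hnbrs
  have hcenter := le_gain_of_nbrsIn_subset s le_rfl (subset_insert v (nbrsIn G W v))
  have htotal := potential_sdiff_add_sum_gain_le hmin (insert_subset hv nbrsIn_subset) hs
  rw [sum_insert notMem_nbrsIn_self] at htotal
  omega

/-! ### Incompressible vertex sets -/

/-- No reduction of `W` to a proper subset pays for itself, where each chosen vertex costs `120`. -/
def IsIncompressible (G : SimpleGraph V) (W : Finset V) : Prop :=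
  ∀ T, ∀ W' ⊂ W, ReducesTo G T W W' → potential G W < potential G W' + 120 * #T

lemma exists_reducesTo_empty (h : ∀ W : Finset V, IsIncompressible G W → W = ∅) (W : Finset V) :
    ∃ S, ReducesTo G S W ∅ ∧ 120 * #S ≤ potential G W := by
  induction W using Finset.strongInduction with
  | H W ih =>
    by_cases hW : IsIncompressible G W
    · rw [h W hW]
      exact ⟨∅, by simp [ReducesTo], by simp⟩
    · simp only [IsIncompressible, not_forall, not_lt] at hW
      obtain ⟨T, W', hss, hred, hpot⟩ := hW
      obtain ⟨S, hS, hcard⟩ := ih W' hss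
      refine ⟨T ∪ S, hred.trans hS, ?_⟩
      have := card_union_le T S
      omega

namespace IsIncompressible

lemma sum_gain_lt {s : ℕ} (hW : IsIncompressible G W)
    (hmin : ∀ v, 4 ≤ (G.neighborSet v).ncard) (hR : R ⊆ W) (hne : R.Nonempty)
    (hred : ReducesTo G T W (W \ R)) (hs : HasSlope G s W R) :
    ∑ u ∈ R, gain G s W R u < 120 * #T := by
  have := hW T _ (sdiff_ssubset hR hne) hred
  have := potential_sdiff_add_sum_gain_le hmin hR hs
  omega

lemma card_mul_lt {s c : ℕ} (hW : IsIncompressible G W)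
    (hmin : ∀ v, 4 ≤ (G.neighborSet v).ncard) (hR : R ⊆ W) (hne : R.Nonempty)
    (hred : ReducesTo G T W (W \ R)) (hs : HasSlope G s W R)
    (hc : ∀ u ∈ R, c ≤ gain G s W R u) : #R * c < 120 * #T :=
  (card_nsmul_le_sum _ _ _ hc).trans_lt (hW.sum_gain_lt hmin hR hne hred hs)

lemma star_lt {s c : ℕ} (hW : IsIncompressible G W)
    (hmin : ∀ v, 4 ≤ (G.neighborSet v).ncard)
    (hv : v ∈ W) (hs : HasSlope G s W (insert v (nbrsIn G W v)))
    (hc : ∀ u ∈ nbrsIn G W v,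
      c + weight (#(nbrsIn G W u) - 1) ≤ 36 + s * (4 - #(nbrsIn G W u))) :
    36 + s * (4 - #(nbrsIn G W v)) + #(nbrsIn G W v) * c < 120 := by
  have := hW {v} _ (sdiff_ssubset (insert_subset hv nbrsIn_subset) (insert_nonempty _ _))
    reducesTo_sdiff_star
  have := potential_sdiff_star_add_le hmin hv hs hc
  rw [card_singleton] at *
  omega

lemma nbrsIn_nonempty (hW : IsIncompressible G W) (hmin : ∀ v, 4 ≤ (G.neighborSet v).ncard)
    (hv : v ∈ W) : (nbrsIn G W v).Nonempty := by
  by_contra! h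
  have hred : ReducesTo G ∅ W (W \ {v}) := reducesTo_sdiff fun u hu ↦ by
    rw [mem_singleton.1 hu, h]
    simp
  have := hW.sum_gain_lt hmin (singleton_subset_iff.2 hv) (singleton_nonempty v) hred hasSlope_zero
  simp at this

lemma card_nbrsIn_le_three (hW : IsIncompressible G W)
    (hmin : ∀ v, 4 ≤ (G.neighborSet v).ncard) (hv : v ∈ W) : #(nbrsIn G W v) ≤ 3 := by
  obtain ⟨m, hm, hmax⟩ := exists_max_image W (fun v ↦ #(nbrsIn G W v)) ⟨v, hv⟩
  refine (hmax v hv).trans ?_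
  by_contra! h4
  have hlt := hW.star_lt hmin hm (c := 36 - weight (#(nbrsIn G W m) - 1)) hasSlope_zero
    fun u hu ↦ by
      have := weight_mono (Nat.sub_le_sub_right (hmax u (nbrsIn_subset hu)) 1)
      have := weight_le (#(nbrsIn G W m) - 1)
      omega
  generalize #(nbrsIn G W m) = d at h4 hlt
  obtain rfl | rfl | h6 : d = 4 ∨ d = 5 ∨ 6 ≤ d := by omega
  · simp [weight] at hlt
  · simp [weight] at hlt
  · have : 6 * 15 ≤ d * (36 - weight (d - 1)) :=
      Nat.mul_le_mul h6 (by have := weight_le (d - 1); omega)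
    omega

lemma card_nbrsIn_le_five (hW : IsIncompressible G W)
    (hmin : ∀ v, 4 ≤ (G.neighborSet v).ncard) (y : V) : #(nbrsIn G W y) ≤ 5 := by
  by_contra! h6
  have := hW.card_mul_lt hmin nbrsIn_subset (card_pos.1 (by omega : 0 < #(nbrsIn G W y)))
    reducesTo_sdiff_nbrsIn hasSlope_zero (c := 21) fun u hu ↦
      have hu3 := hW.card_nbrsIn_le_three hmin (nbrsIn_subset hu)
      le_gain 0 hu3 (card_nbrsIn_sdiff_le.trans hu3)
  rw [card_singleton] at this
  omega

lemma hasSlope_three (hW : IsIncompressible G W) (hmin : ∀ v, 4 ≤ (G.neighborSet v).ncard)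
    (hR : R ⊆ W) : HasSlope G 3 W R :=
  Isolation.hasSlope_three hR fun v _ ↦ hW.card_nbrsIn_le_five hmin v

lemma card_nbrsIn_le_two (hW : IsIncompressible G W)
    (hmin : ∀ v, 4 ≤ (G.neighborSet v).ncard) (hv : v ∈ W) : #(nbrsIn G W v) ≤ 2 := by
  by_contra! h
  have h3 : #(nbrsIn G W v) = 3 := le_antisymm (hW.card_nbrsIn_le_three hmin hv) h
  have hlt := hW.star_lt hmin hv (c := 27)
    (hW.hasSlope_three hmin (insert_subset hv nbrsIn_subset)) fun u hu ↦ by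
      have hd := hW.card_nbrsIn_le_three hmin (nbrsIn_subset hu)
      generalize #(nbrsIn G W u) = d at hd
      interval_cases d <;> decide
  simp [h3] at hlt

end IsIncompressible

/-! ### Ends of path components -/

lemma exists_reducesTo_of_path_three (hmin : ∀ v, 4 ≤ (G.neighborSet v).ncard)
    (hs : ∀ R ⊆ W, HasSlope G 3 W R) (hy : y ∈ W) (hy2 : #(nbrsIn G W y) = 2)
    (hends : ∀ u ∈ nbrsIn G W y, #(nbrsIn G W u) = 1) :
    ∃ t, ∃ W' ⊂ W, ReducesTo G {t} W W' ∧ potential G W' + 130 ≤ potential G W := by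
  have hsub : insert y (nbrsIn G W y) ⊆ W := insert_subset hy nbrsIn_subset
  refine ⟨y, _, sdiff_ssubset hsub (insert_nonempty _ _), reducesTo_sdiff_star, ?_⟩
  have := potential_sdiff_star_add_le hmin hy (hs _ hsub) (c := 45) fun u hu ↦ by
    rw [hends u hu]
    decide
  rw [hy2] at this
  omega

lemma exists_reducesTo_of_path_four (hmin : ∀ v, 4 ≤ (G.neighborSet v).ncard)
    (hs : ∀ R ⊆ W, HasSlope G 3 W R) (hdeg : ∀ v ∈ W, #(nbrsIn G W v) ≤ 2)
    {x₁ x₂ x₃ x₄ : V} (h₁ : x₁ ∈ W) (hN₁ : nbrsIn G W x₁ = {x₂}) (hN₂ : nbrsIn G W x₂ = {x₁, x₃})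
    (h13 : x₁ ≠ x₃) (hN₃ : nbrsIn G W x₃ = {x₂, x₄}) (h24 : x₂ ≠ x₄) :
    ∃ t, ∃ W' ⊂ W, ReducesTo G {t} W W' ∧ potential G W' + 130 ≤ potential G W := by
  obtain ⟨h₂, h12⟩ : x₂ ∈ W ∧ G.Adj x₁ x₂ := mem_nbrsIn.1 (by simp [hN₁])
  obtain ⟨h₃, h23⟩ : x₃ ∈ W ∧ G.Adj x₂ x₃ := mem_nbrsIn.1 (by simp [hN₂])
  obtain ⟨h₄, h34⟩ : x₄ ∈ W ∧ G.Adj x₃ x₄ := mem_nbrsIn.1 (by simp [hN₃])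
  have h14 : x₁ ≠ x₄ := by
    rintro rfl
    have : x₃ ∈ nbrsIn G W x₁ := mem_nbrsIn.2 ⟨h₃, h34.symm⟩
    exact h23.ne' (by simpa [hN₁] using this)
  have hsub : ({x₁, x₂, x₃, x₄} : Finset V) ⊆ W := by grind
  have hred : ReducesTo G {x₃} W (W \ {x₁, x₂, x₃, x₄}) := reducesTo_sdiff fun u hu ↦ by
    simp only [mem_closedNbhd_singleton]
    grind [G.adj_comm]
  have hgain : ∀ u ∈ ({x₁, x₂, x₃, x₄} : Finset V), 34 ≤ gain G 3 W {x₁, x₂, x₃, x₄} u := by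
    intro u hu
    obtain ⟨w, hw, huw⟩ : ∃ w ∈ ({x₁, x₂, x₃, x₄} : Finset V), G.Adj u w := by
      grind [G.adj_comm]
    have hlt := card_nbrsIn_sdiff_lt (mem_nbrsIn.2 ⟨hsub hw, huw⟩) hw
    have hd := hdeg u (hsub hu)
    exact le_gain 3 hd (k := 1) (by omega)
  have hcard : #({x₁, x₂, x₃, x₄} : Finset V) = 4 := by
    simp [h12.ne, h13, h14, h23.ne, h24, h34.ne]
  refine ⟨x₃, _, sdiff_ssubset hsub (insert_nonempty _ _), hred, ?_⟩
  have hsum : _ ≤ ∑ u ∈ {x₁, x₂, x₃, x₄}, gain G 3 W _ u := card_nsmul_le_sum _ _ _ hgain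
  have := potential_sdiff_add_sum_gain_le hmin hsub (hs _ hsub)
  rw [hcard, smul_eq_mul] at hsum
  omega

lemma exists_reducesTo_of_path_end (hmin : ∀ v, 4 ≤ (G.neighborSet v).ncard)
    (hout : ∀ v ∉ W, #(nbrsIn G W v) ≤ 5) (hdeg : ∀ v ∈ W, #(nbrsIn G W v) ≤ 2)
    (hx : x ∈ W) (hy : y ∈ nbrsIn G W x) (hx1 : #(nbrsIn G W x) = 1)
    (hy2 : #(nbrsIn G W y) = 2) :
    ∃ t, ∃ W' ⊂ W, ReducesTo G {t} W W' ∧ potential G W' + 130 ≤ potential G W := by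
  have hs : ∀ R ⊆ W, HasSlope G 3 W R := fun R hR ↦ hasSlope_three hR hout
  have hyW := nbrsIn_subset hy
  obtain ⟨z, hxz, hNy⟩ := exists_eq_pair_of_mem hy2 (mem_nbrsIn_symm hx hy)
  have hz : z ∈ nbrsIn G W y := by simp [hNy]
  have hyz := mem_nbrsIn_symm hyW hz
  by_cases hz1 : #(nbrsIn G W z) = 1
  · exact exists_reducesTo_of_path_three hmin hs hyW hy2 fun u hu ↦ by
      obtain rfl | rfl : u = x ∨ u = z := by simpa [hNy] using hu
      exacts [hx1, hz1]
  · have hz2 : #(nbrsIn G W z) = 2 := by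
      have := card_pos.2 ⟨y, hyz⟩
      have := hdeg z (nbrsIn_subset hz)
      omega
    obtain ⟨t, hyt, hNz⟩ := exists_eq_pair_of_mem hz2 hyz
    obtain ⟨y', hNx⟩ := card_eq_one.1 hx1
    obtain rfl : y = y' := by simpa [hNx] using hy
    exact exists_reducesTo_of_path_four hmin hs hdeg hx hNx hNy hxz hNz hyt

lemma IsIncompressible.card_nbrsIn_eq_two (hW : IsIncompressible G W)
    (hmin : ∀ v, 4 ≤ (G.neighborSet v).ncard) (hx : x ∈ W) (hx2 : #(nbrsIn G W x) = 2)
    (hy : y ∈ nbrsIn G W x) : #(nbrsIn G W y) = 2 := by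
  by_contra hne
  have hyW := nbrsIn_subset hy
  have hy1 : #(nbrsIn G W y) = 1 := by
    have := hW.card_nbrsIn_le_two hmin hyW
    have := card_pos.2 (hW.nbrsIn_nonempty hmin hyW)
    omega
  obtain ⟨t, W', hss, hred, hpot⟩ := exists_reducesTo_of_path_end hmin
    (fun v _ ↦ hW.card_nbrsIn_le_five hmin v) (fun v ↦ hW.card_nbrsIn_le_two hmin) hyW
    (mem_nbrsIn_symm hx hy) hy1 hx2
  have := hW _ _ hss hred
  rw [card_singleton] at this
  omega

/-! ### Eliminating cycle components -/

lemma IsCycleComponent.length_mul_lt {n s : ℕ} [NeZero n] {x : Fin n → V}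
    (hx : IsCycleComponent G W x) (hW : IsIncompressible G W)
    (hmin : ∀ v, 4 ≤ (G.neighborSet v).ncard) (hred : ReducesTo G T W (W \ univ.image x))
    (hs : HasSlope G s W (univ.image x)) : n * (36 + s * 2) < 120 * #T := by
  have := hW.card_mul_lt hmin hx.image_subset (univ_nonempty.image x) hred hs fun u hu ↦ by
    obtain ⟨i, -, rfl⟩ := mem_image.1 hu
    exact hx.le_gain s subset_rfl i
  rwa [hx.card_image] at this

namespace IsIncompressible

lemma not_isCycleComponent_four {x : Fin 4 → V} (hW : IsIncompressible G W)
    (hmin : ∀ v, 4 ≤ (G.neighborSet v).ncard) : ¬ IsCycleComponent G W x := by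
  intro hx
  have hred : ReducesTo G {x 0} W (W \ univ.image x) := reducesTo_sdiff fun u hu ↦ by
    obtain ⟨i, -, rfl⟩ := mem_image.1 hu
    have h01 : G.Adj (x 0) (x 1) := hx.adj 0
    have h03 : G.Adj (x 0) (x 3) := (hx.adj 3).symm
    simp only [mem_closedNbhd_singleton, hx.nbrsIn_eq]
    fin_cases i <;> simp [h01, h03]
  have := hx.length_mul_lt hW hmin hred hasSlope_zero
  simp at this

lemma nbrsIn_subset_of_adj_zero {x : Fin 5 → V} (hW : IsIncompressible G W)
    (hmin : ∀ v, 4 ≤ (G.neighborSet v).ncard) (hx : IsCycleComponent G W x)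
    (hy : G.Adj y (x 0)) : nbrsIn G W y ⊆ univ.image x := by
  intro z hz
  by_contra hzx
  obtain ⟨hzW, hyz⟩ := mem_nbrsIn.1 hz
  -- The vertices `y` and `x 2` together isolate the cycle and hit `z` as a bonus.
  have hsub : insert z (univ.image x) ⊆ W := insert_subset hzW hx.image_subset
  have hred : ReducesTo G {y, x 2} W (W \ insert z (univ.image x)) := reducesTo_sdiff fun u hu ↦ by
    have h21 : G.Adj (x 2) (x 1) := (hx.adj 1).symm
    have h23 : G.Adj (x 2) (x 3) := hx.adj 2
    simp only [mem_closedNbhd_pair]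
    obtain rfl | hu := mem_insert.1 hu
    · exact .inl (.inr (.inl hyz))
    obtain ⟨i, -, rfl⟩ := mem_image.1 hu
    rw [hx.nbrsIn_eq]
    fin_cases i <;> simp [hy, h21, h23]
  have hgain : ∀ u ∈ univ.image x, 42 ≤ gain G 3 W (insert z (univ.image x)) u := fun u hu ↦ by
    obtain ⟨i, -, rfl⟩ := mem_image.1 hu
    exact hx.le_gain 3 (subset_insert _ _) i
  have hgainz : 30 ≤ gain G 3 W (insert z (univ.image x)) z :=
    have hz2 := hW.card_nbrsIn_le_two hmin hzW
    Isolation.le_gain 3 hz2 (card_nbrsIn_sdiff_le.trans hz2)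
  have hlt := hW.sum_gain_lt hmin hsub (insert_nonempty _ _) hred (hW.hasSlope_three hmin hsub)
  have hsum : _ ≤ ∑ u ∈ univ.image x, gain G 3 W _ u := card_nsmul_le_sum _ _ _ hgain
  have hpair := card_le_two (a := y) (b := x 2)
  rw [sum_insert hzx] at hlt
  rw [hx.card_image, smul_eq_mul] at hsum
  omega

lemma not_isCycleComponent_five {x : Fin 5 → V} (hW : IsIncompressible G W)
    (hmin : ∀ v, 4 ≤ (G.neighborSet v).ncard) (htf : G.CliqueFree 3) :
    ¬ IsCycleComponent G W x := by
  intro hx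
  have hclosed : ∀ y, ∀ i, G.Adj y (x i) → nbrsIn G W y ⊆ univ.image x := by
    intro y i hy z hz
    have := hW.nbrsIn_subset_of_adj_zero hmin (hx.rotate i) (by simpa using hy) hz
    grind
  have hs : HasSlope G 6 W (univ.image x) := fun v _ ↦ by
    have hle := hx.two_mul_card_nbrsIn_le htf v
    obtain h0 | ⟨w, hw⟩ := (nbrsIn G (univ.image x) v).eq_empty_or_nonempty
    · simpa [h0] using weight_mono card_nbrsIn_sdiff_le
    · obtain ⟨hwR, hvw⟩ := mem_nbrsIn.1 hw
      obtain ⟨i, -, rfl⟩ := mem_image.1 hwR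
      rw [← card_nbrsIn_sdiff_add hx.image_subset, nbrsIn_sdiff_eq_empty (hclosed v i hvw)]
      have hpos := card_pos.2 ⟨_, hw⟩
      obtain h | h : #(nbrsIn G (univ.image x) v) = 1 ∨ #(nbrsIn G (univ.image x) v) = 2 := by
        omega
      all_goals simp [h, weight]
  have hred : ReducesTo G {x 0, x 2} W (W \ univ.image x) := reducesTo_sdiff fun u hu ↦ by
    obtain ⟨i, -, rfl⟩ := mem_image.1 hu
    have h01 : G.Adj (x 0) (x 1) := hx.adj 0
    have h23 : G.Adj (x 2) (x 3) := hx.adj 2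
    have h04 : G.Adj (x 0) (x 4) := (hx.adj 4).symm
    rw [mem_closedNbhd_pair]
    fin_cases i <;> simp [h01, h23, h04]
  have := hx.length_mul_lt hW hmin hred hs
  have := card_le_two (a := x 0) (b := x 2)
  omega

lemma eq_or_eq_of_nbrsIn_eq_pair {x₀ x₁ x₂ x₃ y₁ y₂ : V} (hW : IsIncompressible G W)
    (hmin : ∀ v, 4 ≤ (G.neighborSet v).ncard) (h₀ : x₀ ∈ W) (hx₀ : nbrsIn G W x₀ = {y₁, x₁})
    (hx₁ : nbrsIn G W x₁ = {x₀, x₂}) (hy₁ : nbrsIn G W y₁ = {x₀, y₂})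
    (hx₂ : nbrsIn G W x₂ = {x₁, x₃}) (hy₁x₁ : y₁ ≠ x₁) (hx₀x₂ : x₀ ≠ x₂) (hy₁x₂ : y₁ ≠ x₂)
    (hx₁x₃ : x₁ ≠ x₃) : x₂ = y₂ ∨ x₃ = y₂ := by
  by_contra! hne
  obtain ⟨hx₂', hN₂, hN₃⟩ :=
    nbrsIn_sdiff_star_of_path hx₀ hx₁ hy₁ hx₂ hx₀x₂ hy₁x₂ hx₁x₃ hne.1 hne.2
  have hcard₀ : #(nbrsIn G W x₀) = 2 := by rw [hx₀, card_pair hy₁x₁]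
  have hcard₂ : #(nbrsIn G W x₂) = 2 := by rw [hx₂, card_pair hx₁x₃]
  have hcard₃ : #(nbrsIn G W x₃) = 2 :=
    hW.card_nbrsIn_eq_two hmin (mem_sdiff.1 hx₂').1 hcard₂ (by simp [hx₂])
  have hsub : insert x₀ (nbrsIn G W x₀) ⊆ W := insert_subset h₀ nbrsIn_subset
  have hstar := potential_sdiff_star_add_le hmin h₀ (hW.hasSlope_three hmin hsub) (c := 34)
    fun u hu ↦ by rw [hW.card_nbrsIn_eq_two hmin h₀ hcard₀ hu]; decide
  -- Deleting the star of `x₀` turns the cycle into a path with end `x₂`.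
  obtain ⟨t, W', hss, hred, hpot⟩ := exists_reducesTo_of_path_end hmin
    (fun v _ ↦ card_nbrsIn_sdiff_le.trans (hW.card_nbrsIn_le_five hmin v))
    (fun v hv ↦ card_nbrsIn_sdiff_le.trans (hW.card_nbrsIn_le_two hmin (mem_sdiff.1 hv).1))
    hx₂' (y := x₃) (by simp [hN₂]) (by simp [hN₂]) (by rw [hN₃, hcard₃])
  have hlt := hW _ _ (hss.trans_subset sdiff_subset) (reducesTo_sdiff_star.trans hred)
  have hpair := card_union_le {x₀} {t}
  rw [card_singleton, card_singleton] at hpair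
  rw [hcard₀] at hstar
  omega

lemma card_nbrsIn_ne_two (hW : IsIncompressible G W) (hmin : ∀ v, 4 ≤ (G.neighborSet v).ncard)
    (htf : G.CliqueFree 3) {x₀ : V} (h₀ : x₀ ∈ W) : #(nbrsIn G W x₀) ≠ 2 := by
  intro hcard₀
  have hnext : ∀ u ∈ W, #(nbrsIn G W u) = 2 → ∀ v ∈ nbrsIn G W u,
      v ∈ W ∧ G.Adj u v ∧ #(nbrsIn G W v) = 2 ∧ ∃ w, u ≠ w ∧ nbrsIn G W v = {u, w} := by
    intro u hu hu2 v hv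
    have hv2 := hW.card_nbrsIn_eq_two hmin hu hu2 hv
    exact ⟨nbrsIn_subset hv, (mem_nbrsIn.1 hv).2, hv2,
      exists_eq_pair_of_mem hv2 (mem_nbrsIn_symm hu hv)⟩
  obtain ⟨y₁, hy₁⟩ := hW.nbrsIn_nonempty hmin h₀
  obtain ⟨x₁, hy₁x₁, hNx₀⟩ := exists_eq_pair_of_mem hcard₀ hy₁
  obtain ⟨hy₁W, -, hcardy₁, y₂, hx₀y₂, hNy₁⟩ := hnext x₀ h₀ hcard₀ y₁ hy₁
  obtain ⟨hx₁W, -, hcardx₁, x₂, hx₀x₂, hNx₁⟩ := hnext x₀ h₀ hcard₀ x₁ (by simp [hNx₀])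
  obtain ⟨hx₂W, hx₁x₂, -, x₃, hx₁x₃, hNx₂⟩ := hnext x₁ hx₁W hcardx₁ x₂ (by simp [hNx₁])
  obtain ⟨-, -, -, y₃, -, hNy₂⟩ := hnext y₁ hy₁W hcardy₁ y₂ (by simp [hNy₁])
  have hy₁x₂ : y₁ ≠ x₂ := by
    rintro rfl
    exact not_adj_of_mem_nbrsIn htf (by simp [hNx₀]) hy₁ hx₁x₂
  rcases hW.eq_or_eq_of_nbrsIn_eq_pair hmin h₀ hNx₀ hNx₁ hNy₁ hNx₂ hy₁x₁ hx₀x₂ hy₁x₂ hx₁x₃ with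
    rfl | rfl
  · exact hW.not_isCycleComponent_four hmin <|
      isCycleComponent_four hNx₀ hNx₁ (by grind) (by rw [hNy₁, pair_comm]) hx₀x₂ hy₁x₁.symm
  · have hx₂x₃ : x₂ ∈ nbrsIn G W x₃ := mem_nbrsIn_symm hx₂W (by simp [hNx₂])
    exact hW.not_isCycleComponent_five hmin htf <|
      isCycleComponent_five hNx₀ hNx₁ hNx₂ (by grind) (by rw [hNy₁, pair_comm])

lemma card_nbrsIn_eq_one (hW : IsIncompressible G W) (hmin : ∀ v, 4 ≤ (G.neighborSet v).ncard)
    (htf : G.CliqueFree 3) (hv : v ∈ W) : #(nbrsIn G W v) = 1 := by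
  have := card_pos.2 (hW.nbrsIn_nonempty hmin hv)
  have := hW.card_nbrsIn_le_two hmin hv
  have := hW.card_nbrsIn_ne_two hmin htf hv
  omega

lemma card_nbrsIn_le_one (hW : IsIncompressible G W) (hmin : ∀ v, 4 ≤ (G.neighborSet v).ncard)
    (htf : G.CliqueFree 3) (y : V) : #(nbrsIn G W y) ≤ 1 := by
  by_contra! h
  obtain ⟨p, hp, q, hq, hpq⟩ := one_lt_card.1 h
  have hpW := nbrsIn_subset hp
  have hqW := nbrsIn_subset hq
  have hpartner : ∀ u ∈ W, ∃ u' ∈ W, G.Adj u u' ∧ nbrsIn G W u = {u'} ∧ nbrsIn G W u' = {u} := by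
    intro u hu
    obtain ⟨u', hNu⟩ := card_eq_one.1 (hW.card_nbrsIn_eq_one hmin htf hu)
    have hu' : u' ∈ nbrsIn G W u := by simp [hNu]
    obtain ⟨u'', hNu'⟩ := card_eq_one.1 (hW.card_nbrsIn_eq_one hmin htf (nbrsIn_subset hu'))
    obtain rfl : u = u'' := by simpa [hNu'] using mem_nbrsIn_symm hu hu'
    exact ⟨u', nbrsIn_subset hu', (mem_nbrsIn.1 hu').2, hNu, hNu'⟩
  obtain ⟨p', hp'W, hpp', hNp, hNp'⟩ := hpartner p hpW
  obtain ⟨q', hq'W, hqq', hNq, hNq'⟩ := hpartner q hqW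
  have hp'q : p' ≠ q := by rintro rfl; exact not_adj_of_mem_nbrsIn htf hp hq hpp'
  have hpq' : p ≠ q' := by rintro rfl; exact not_adj_of_mem_nbrsIn htf hq hp hqq'
  have hp'q' : p' ≠ q' := by rintro rfl; exact hpq (by simpa [hNp'] using hNq')
  have hred : ReducesTo G {y} W (W \ {p, p', q, q'}) := reducesTo_sdiff fun u hu ↦ by
    have := (mem_nbrsIn.1 hp).2
    have := (mem_nbrsIn.1 hq).2
    simp only [mem_closedNbhd_singleton]
    grind
  have hlt := hW.card_mul_lt hmin (by grind) (insert_nonempty _ _) hred hasSlope_zero fun u hu ↦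
    le_gain_of_nbrsIn_subset 0 (hW.card_nbrsIn_eq_one hmin htf (by grind)).le (by grind)
  have hcard : #({p, p', q, q'} : Finset V) = 4 := by
    simp [hpp'.ne, hpq, hpq', hp'q, hp'q', hqq'.ne]
  simp [hcard] at hlt

lemma eq_empty (hW : IsIncompressible G W) (hmin : ∀ v, 4 ≤ (G.neighborSet v).ncard)
    (htf : G.CliqueFree 3) : W = ∅ := by
  by_contra! h
  obtain ⟨x, hx⟩ := h
  have hdeg : ∀ v ∈ W, #(nbrsIn G W v) = 1 := fun v ↦ hW.card_nbrsIn_eq_one hmin htf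
  have hs : HasSlope G 8 W (insert x (nbrsIn G W x)) :=
    hasSlope_eight (insert_subset hx nbrsIn_subset) fun v _ ↦ hW.card_nbrsIn_le_one hmin htf v
  have := hW.star_lt hmin hx hs (c := 60) fun u hu ↦ by
    rw [hdeg u (nbrsIn_subset hu)]
    decide
  simp [hdeg x hx] at this

end IsIncompressible

lemma isolationNumber_le_card {S : Finset V} (hS : ReducesTo G S univ ∅) :
    isolationNumber G ≤ #S :=
  Nat.sInf_le ⟨S, fun u v huv ↦ by simpa using hS u (mem_univ u) v (mem_univ v) huv,
    Set.ncard_coe_finset S⟩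

end Isolation

/-- If `G` is triangle-free of order `n` with minimum degree at least 4,
then `ι(G) ≤ 3n/10`. -/
theorem isolation_number_triangleFree_minDegree_four {V : Type*} [Fintype V]
    (G : SimpleGraph V) (n : ℕ) (hn : Fintype.card V = n)
    (htf : G.CliqueFree 3) (hmin : ∀ v : V, 4 ≤ (G.neighborSet v).ncard) :
    (isolationNumber G : ℝ) ≤ 3 * n / 10 := by
  obtain ⟨S, hS, hcard⟩ :=
    Isolation.exists_reducesTo_empty (fun W hW ↦ hW.eq_empty hmin htf) Finset.univ
  have hpot : Isolation.potential G Finset.univ = 36 * n := by simp [Isolation.potential, hn]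
  have hle : 10 * isolationNumber G ≤ 3 * n := by
    have := Isolation.isolationNumber_le_card hS
    omega
  have : (10 : ℝ) * isolationNumber G ≤ 3 * n := mod_cast hle
  linarith
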